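/- In the uncontrolled setting with an irreducible stochastic matrix P, the following assertions are equivalent: (i) the domain D is nonempty; (ii) for all 1 ≤ i, j, k ≤ d one has the triangle inequality C_{j,k} ≤ C_{j,i} + C_{i,k}; (iii) for every round trip of length at most d, i.e. every 1 ≤ n ≤ d and pairwise distinct indices i_1, …, i_n in {1,…,d}, one has ∑_{k=1}^{n−1} C_{i_k, i_{k+1}} + C_{i_n, i_1} ≥ 0. -/

import Mathlib

/-!
Write `Q = 1 - P`. A vector `v` with `Q v ≥ 0` off a set `T` attains its minimum on `T`, because
from a minimizer outside `T` all transitions of the chain lead to minimizers. The column `C · k`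
solves `Q (C · k) = c - λₖ eₖ`, where `λₖ` is the expected cost of an excursion from `k` back to
`k`, and all three assertions amount to `0 ≤ λₖ`:

* `-C · k` lies in the domain if `0 ≤ λₖ`. Conversely, if `x` lies in the domain, then `x + C · k`
  is superharmonic off `k`, hence minimal at `k`, hence `0 ≥ Q (x + C · k) k ≥ -λₖ`.
* The excess `h l = C l i + C i k - C l k` of the detour through `i` satisfies
  `Q h = λₖ eₖ - λᵢ eᵢ` and `h i = 0`. By the minimum principle off `i`, `0 ≤ λₖ` gives `0 ≤ h`,
  and `λₖ < 0` gives `h ≤ 0`. In the latter case the round trip `h k = C k i + C i k` is negative,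
  since otherwise `h` is maximal at `k ≠ i`, so that `λₖ = Q h k ≥ 0`.
-/

open Matrix

lemma submatrix_mulVec_apply_eq_mulVec_extend {m n o p R : Type*} [Fintype n] [Fintype p]
    [NonUnitalNonAssocSemiring R] (M : Matrix m n R) (f : o → m) {g : p → n}
    (hg : Function.Injective g) (w : p → R) (k : o) :
    (M.submatrix f g *ᵥ w) k = (M *ᵥ Function.extend g w 0) (f k) := by
  refine Fintype.sum_of_injective g hg _ _ (fun l hl => ?_) fun l => ?_
  · rw [Function.extend_apply' _ _ _ hl, Pi.zero_apply, mul_zero]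
  · change M (f k) (g l) * w l = M (f k) (g l) * Function.extend g w 0 (g l)
    rw [hg.extend_apply]

section PathCost

variable {ι M : Type*} [AddCommMonoid M] [PartialOrder M] [IsOrderedAddMonoid M] {C : ι → ι → M}

lemma le_sum_path_of_triangle (hdiag : ∀ j, C j j = 0) (htri : ∀ i j k, C j k ≤ C j i + C i k)
    {m : ℕ} (idx : Fin (m + 1) → ι) :
    C (idx 0) (idx (Fin.last m)) ≤ ∑ k : Fin m, C (idx k.castSucc) (idx k.succ) := by
  induction m with
  | zero => simp [hdiag]
  | succ m ih =>
    calc C (idx 0) (idx (Fin.last (m + 1)))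
        ≤ C (idx 0) (idx (Fin.last m).castSucc)
            + C (idx (Fin.last m).castSucc) (idx (Fin.last (m + 1))) := htri _ _ _
      _ ≤ (∑ k : Fin m, C (idx k.castSucc.castSucc) (idx k.succ.castSucc))
            + C (idx (Fin.last m).castSucc) (idx (Fin.last m).succ) :=
          add_le_add_left (ih fun k => idx k.castSucc) _
      _ = ∑ k : Fin (m + 1), C (idx k.castSucc) (idx k.succ) :=
          (Fin.sum_univ_castSucc fun k : Fin (m + 1) => C (idx k.castSucc) (idx k.succ)).symm

lemma roundTrip_nonneg_of_triangle (hdiag : ∀ j, C j j = 0)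
    (htri : ∀ i j k, C j k ≤ C j i + C i k) {m : ℕ} (idx : Fin (m + 1) → ι) :
    0 ≤ (∑ k : Fin m, C (idx k.castSucc) (idx k.succ)) + C (idx (Fin.last m)) (idx 0) :=
  calc 0 = C (idx 0) (idx 0) := (hdiag _).symm
    _ ≤ C (idx 0) (idx (Fin.last m)) + C (idx (Fin.last m)) (idx 0) := htri _ _ _
    _ ≤ _ := add_le_add_left (le_sum_path_of_triangle hdiag htri idx) _

end PathCost

section RowSum

variable {ι R : Type*} [Fintype ι] [DecidableEq ι] [Ring R] {P : Matrix ι ι R}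

lemma one_sub_mulVec_apply_eq_sum (hP : P *ᵥ 1 = 1) (v : ι → R) (i : ι) :
    ((1 - P) *ᵥ v) i = ∑ j, P i j * (v i - v j) := by
  have hsum : ∑ j, P i j = 1 := by simpa [mulVec, dotProduct] using congrFun hP i
  calc ((1 - P) *ᵥ v) i = v i - ∑ j, P i j * v j := by
        rw [sub_mulVec, one_mulVec, Pi.sub_apply]; rfl
    _ = ∑ j, P i j * (v i - v j) := by
        simp only [mul_sub, Finset.sum_sub_distrib, ← Finset.sum_mul, hsum, one_mul]

lemma one_sub_mulVec_const (hP : P *ᵥ 1 = 1) (a : R) : ((1 - P) *ᵥ fun _ => a) = 0 := by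
  ext i
  simp [one_sub_mulVec_apply_eq_sum hP]

end RowSum

section Minimizer

variable {ι R : Type*} [Fintype ι] [DecidableEq ι] [Ring R] [PartialOrder R] [IsOrderedRing R]
  {P : Matrix ι ι R} {v : ι → R}

lemma one_sub_mulVec_apply_nonpos_of_forall_le (hP : P ∈ rowStochastic R ι) {i : ι}
    (hmin : ∀ j, v i ≤ v j) : ((1 - P) *ᵥ v) i ≤ 0 := by
  rw [one_sub_mulVec_apply_eq_sum hP.2]
  exact Finset.sum_nonpos fun j _ =>
    mul_nonpos_of_nonneg_of_nonpos (nonneg_of_mem_rowStochastic hP) (sub_nonpos.2 (hmin j))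

variable [NoZeroDivisors R]

lemma eq_of_forall_le_of_one_sub_mulVec_apply_nonneg (hP : P ∈ rowStochastic R ι) {i j : ι}
    (hmin : ∀ l, v i ≤ v l) (hv : 0 ≤ ((1 - P) *ᵥ v) i) (hij : P i j ≠ 0) : v j = v i := by
  have hsum : ∑ l, P i l * (v i - v l) = 0 := by
    rw [← one_sub_mulVec_apply_eq_sum hP.2]
    exact (one_sub_mulVec_apply_nonpos_of_forall_le hP hmin).antisymm hv
  have hterm : P i j * (v i - v j) = 0 :=
    (Finset.sum_eq_zero_iff_of_nonpos fun l _ => mul_nonpos_of_nonneg_of_nonpos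
      (nonneg_of_mem_rowStochastic hP) (sub_nonpos.2 (hmin l))).1 hsum j (Finset.mem_univ j)
  exact (sub_eq_zero.1 ((mul_eq_zero.1 hterm).resolve_left hij)).symm

lemma exists_mem_eq_of_forall_le_of_pow_apply_ne_zero (hP : P ∈ rowStochastic R ι) {T : Set ι}
    (hv : ∀ l ∉ T, 0 ≤ ((1 - P) *ᵥ v) l) {t : ι} (ht : t ∈ T) {k : ℕ} {s : ι}
    (hst : (P ^ k) s t ≠ 0) (hmin : ∀ j, v s ≤ v j) : ∃ t ∈ T, v t = v s := by
  induction k generalizing s with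
  | zero =>
    obtain rfl : s = t := by
      by_contra hne
      exact hst (by rw [pow_zero, one_apply_ne hne])
    exact ⟨s, ht, rfl⟩
  | succ k ih =>
    by_cases hs : s ∈ T
    · exact ⟨s, hs, rfl⟩
    rw [pow_succ', mul_apply] at hst
    obtain ⟨a, -, ha⟩ := Finset.exists_ne_zero_of_sum_ne_zero hst
    have hva : v a = v s :=
      eq_of_forall_le_of_one_sub_mulVec_apply_nonneg hP hmin (hv s hs) (left_ne_zero_of_mul ha)
    rw [← hva]
    exact ih (right_ne_zero_of_mul ha) fun j => hva.trans_le (hmin j)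

end Minimizer

section MinimumPrinciple

variable {ι R : Type*} [Fintype ι] [DecidableEq ι] [Ring R] [LinearOrder R]
  [IsStrictOrderedRing R] {P : Matrix ι ι R} {v : ι → R}

theorem le_of_one_sub_mulVec_nonneg_off_of_reachable (hP : P ∈ rowStochastic R ι) {T : Set ι}
    (hreach : ∀ l, ∃ t ∈ T, ∃ k : ℕ, (P ^ k) l t ≠ 0) (hv : ∀ l ∉ T, 0 ≤ ((1 - P) *ᵥ v) l)
    {a : R} (ha : ∀ t ∈ T, a ≤ v t) (l : ι) : a ≤ v l := by
  have : Nonempty ι := ⟨l⟩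
  obtain ⟨s, hs⟩ := Finite.exists_min v
  obtain ⟨t, ht, k, hst⟩ := hreach s
  obtain ⟨u, hu, hus⟩ := exists_mem_eq_of_forall_le_of_pow_apply_ne_zero hP hv ht hst hs
  exact (ha u hu).trans (hus.trans_le (hs l))

theorem le_of_one_sub_mulVec_nonneg_off (hP : P ∈ rowStochastic R ι) (hirr : P.IsIrreducible)
    {T : Set ι} (hT : T.Nonempty) (hv : ∀ l ∉ T, 0 ≤ ((1 - P) *ᵥ v) l)
    {a : R} (ha : ∀ t ∈ T, a ≤ v t) (l : ι) : a ≤ v l := by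
  obtain ⟨t, ht⟩ := hT
  refine le_of_one_sub_mulVec_nonneg_off_of_reachable hP (fun s => ⟨t, ht, ?_⟩) hv ha l
  obtain ⟨k, -, hk⟩ := (isIrreducible_iff_exists_pow_pos hP.1).1 hirr s t
  exact ⟨k, hk.ne'⟩

theorem le_of_one_sub_mulVec_nonneg_off_singleton (hP : P ∈ rowStochastic R ι)
    (hirr : P.IsIrreducible) {i : ι} (hv : ∀ l ≠ i, 0 ≤ ((1 - P) *ᵥ v) l) (l : ι) :
    v i ≤ v l :=
  le_of_one_sub_mulVec_nonneg_off hP hirr (Set.singleton_nonempty i) hv (by simp) l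

theorem eq_zero_of_one_sub_mulVec_eq_zero_off (hP : P ∈ rowStochastic R ι)
    (hirr : P.IsIrreducible) {T : Set ι} (hT : T.Nonempty)
    (hv : ∀ l ∉ T, ((1 - P) *ᵥ v) l = 0) (hv0 : ∀ t ∈ T, v t = 0) : v = 0 := by
  ext l
  have hle : 0 ≤ v l :=
    le_of_one_sub_mulVec_nonneg_off hP hirr hT (fun l hl => (hv l hl).ge)
      (fun t ht => (hv0 t ht).ge) l
  have hge : 0 ≤ (-v) l :=
    le_of_one_sub_mulVec_nonneg_off hP hirr hT (fun l hl => by simp [mulVec_neg, hv l hl])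
      (fun t ht => by simp [hv0 t ht]) l
  exact (neg_nonneg.1 hge).antisymm hle

end MinimumPrinciple

section CostMatrix

variable {ι R : Type*} [Fintype ι] [DecidableEq ι] [Ring R]

/-- The domain `D` of the transition matrix `P` and the cost vector `c`. -/
def costDomain [Preorder R] (P : Matrix ι ι R) (c : ι → R) : Set (ι → R) :=
  {x | 0 ≤ (1 - P) *ᵥ x + c}

lemma costDomain_eq_setOf [PartialOrder R] [IsOrderedAddMonoid R] (P : Matrix ι ι R)
    (c : ι → R) : costDomain P c = {x | ∀ i, (∑ j, P i j * x j) - c i ≤ x i} := by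
  ext x
  refine forall_congr' fun i => ?_
  rw [sub_mulVec, one_mulVec]
  change 0 ≤ x i - (∑ j, P i j * x j) + c i ↔ (∑ j, P i j * x j) - c i ≤ x i
  rw [sub_add, sub_nonneg]

/-- `C i j` is the expected cost of travelling from `i` to `j`, encoded by the Poisson equation off
`j` in place of the inverse of the reduced matrix `Q^{(j,j)}`, so that index types other than
`Fin d` and rings without division are covered. -/
structure IsCostMatrix (P : Matrix ι ι R) (c : ι → R) (C : ι → ι → R) : Prop where
  diag (j : ι) : C j j = 0
  poisson {i j : ι} (hij : i ≠ j) : ((1 - P) *ᵥ (C · j)) i = c i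

/-- The expected cost `λₖ` of an excursion from `k` back to `k`. As `C k k = 0`, it equals
`c k + ∑ j, P k j * C j k`: the cost of the first step followed by the cost of returning. -/
def excursionCost (P : Matrix ι ι R) (c : ι → R) (C : ι → ι → R) (k : ι) : R :=
  c k - ((1 - P) *ᵥ (C · k)) k

/-- The extra cost, as a function of the starting point, of reaching `k` through `i`. -/
def detourExcess (C : ι → ι → R) (i k : ι) : ι → R :=
  fun l => C l i + C i k - C l k

end CostMatrix

namespace IsCostMatrix

variable {ι R : Type*} [Fintype ι] [DecidableEq ι] [Ring R] {P : Matrix ι ι R}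
  {c : ι → R} {C : ι → ι → R}

lemma one_sub_mulVec_col (hC : IsCostMatrix P c C) (k : ι) :
    (1 - P) *ᵥ (C · k) = c - Pi.single k (excursionCost P c C k) := by
  ext i
  obtain rfl | hik := eq_or_ne i k
  · simp [excursionCost]
  · simp [hC.poisson hik, hik]

lemma detourExcess_self (hC : IsCostMatrix P c C) (i k : ι) : detourExcess C i k i = 0 := by
  simp [detourExcess, hC.diag]

lemma one_sub_mulVec_detourExcess (hC : IsCostMatrix P c C) (hP : P *ᵥ 1 = 1) (i k : ι) :
    (1 - P) *ᵥ detourExcess C i k =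
      Pi.single k (excursionCost P c C k) - Pi.single i (excursionCost P c C i) := by
  have hsplit : detourExcess C i k = (C · i) + (fun _ => C i k) - (C · k) := rfl
  rw [hsplit, mulVec_sub, mulVec_add, one_sub_mulVec_const hP, hC.one_sub_mulVec_col,
    hC.one_sub_mulVec_col]
  abel

variable [LinearOrder R] [IsStrictOrderedRing R]

theorem costDomain_nonempty_iff (hC : IsCostMatrix P c C) (hP : P ∈ rowStochastic R ι)
    (hirr : P.IsIrreducible) (k : ι) :
    (costDomain P c).Nonempty ↔ 0 ≤ excursionCost P c C k := by
  constructor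
  · rintro ⟨x, hx⟩
    have hadd : (1 - P) *ᵥ (x + (C · k)) =
        (1 - P) *ᵥ x + c - Pi.single k (excursionCost P c C k) := by
      rw [mulVec_add, hC.one_sub_mulVec_col, add_sub_assoc]
    have hmin : ∀ l, (x + (C · k)) k ≤ (x + (C · k)) l :=
      le_of_one_sub_mulVec_nonneg_off_singleton hP hirr fun l hl => by
        rw [hadd, Pi.sub_apply, Pi.single_eq_of_ne hl, sub_zero]
        exact hx l
    have hle := one_sub_mulVec_apply_nonpos_of_forall_le hP hmin
    rw [hadd, Pi.sub_apply, Pi.single_eq_same, sub_nonpos] at hle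
    exact (hx k).trans hle
  · intro hk
    have hres : (1 - P) *ᵥ (-(C · k)) + c = Pi.single k (excursionCost P c C k) := by
      rw [mulVec_neg, hC.one_sub_mulVec_col]
      abel
    have hsingle : (0 : ι → R) ≤ Pi.single k (excursionCost P c C k) := Pi.single_nonneg.2 hk
    exact ⟨-(C · k), hsingle.trans_eq hres.symm⟩

theorem triangle_of_excursionCost_nonneg (hC : IsCostMatrix P c C) (hP : P ∈ rowStochastic R ι)
    (hirr : P.IsIrreducible) {k : ι} (hk : 0 ≤ excursionCost P c C k) (i j : ι) :
    C j k ≤ C j i + C i k := by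
  have hsingle : (0 : ι → R) ≤ Pi.single k (excursionCost P c C k) := Pi.single_nonneg.2 hk
  have hmin : detourExcess C i k i ≤ detourExcess C i k j :=
    le_of_one_sub_mulVec_nonneg_off_singleton hP hirr (fun l hl => by
      rw [hC.one_sub_mulVec_detourExcess hP.2, Pi.sub_apply, Pi.single_eq_of_ne hl, sub_zero]
      exact hsingle l) j
  rwa [hC.detourExcess_self, detourExcess, sub_nonneg] at hmin

theorem excursionCost_nonneg_of_roundTrip_nonneg (hC : IsCostMatrix P c C)
    (hP : P ∈ rowStochastic R ι) (hirr : P.IsIrreducible) {i k : ι} (hik : i ≠ k)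
    (hround : 0 ≤ C i k + C k i) : 0 ≤ excursionCost P c C k := by
  by_contra! hk
  have hres : (1 - P) *ᵥ (-detourExcess C i k) =
      Pi.single i (excursionCost P c C i) + Pi.single k (-excursionCost P c C k) := by
    rw [mulVec_neg, hC.one_sub_mulVec_detourExcess hP.2, Pi.single_neg]
    abel
  have hsingle : (0 : ι → R) ≤ Pi.single k (-excursionCost P c C k) :=
    Pi.single_nonneg.2 (neg_nonneg.2 hk.le)
  have hmin : ∀ l, (-detourExcess C i k) i ≤ (-detourExcess C i k) l :=
    le_of_one_sub_mulVec_nonneg_off_singleton hP hirr fun l hl => by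
      rw [hres, Pi.add_apply, Pi.single_eq_of_ne hl, zero_add]
      exact hsingle l
  have hk_le : (-detourExcess C i k) k ≤ (-detourExcess C i k) i := by
    rw [Pi.neg_apply, Pi.neg_apply, hC.detourExcess_self, neg_zero, neg_nonpos, detourExcess,
      hC.diag, sub_zero, add_comm]
    exact hround
  have hle := one_sub_mulVec_apply_nonpos_of_forall_le hP fun l => hk_le.trans (hmin l)
  rw [hres, Pi.add_apply, Pi.single_eq_of_ne hik.symm, Pi.single_eq_same, zero_add] at hle
  exact (neg_nonpos.1 hle).not_gt hk

end IsCostMatrix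

section ReducedMatrix

theorem det_submatrix_one_sub_ne_zero {ι R : Type*} [Fintype ι] [DecidableEq ι] [CommRing R]
    [LinearOrder R] [IsStrictOrderedRing R] {P : Matrix ι ι R} (hP : P ∈ rowStochastic R ι)
    (hirr : P.IsIrreducible) {κ : Type*} [Fintype κ] [DecidableEq κ] {f : κ → ι}
    (hf : Function.Injective f) (hf' : ¬ Function.Surjective f) :
    ((1 - P).submatrix f f).det ≠ 0 := by
  intro hdet
  obtain ⟨w, hw, hw0⟩ := exists_mulVec_eq_zero_iff.2 hdet
  have hext : Function.extend f w 0 = 0 := by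
    refine eq_zero_of_one_sub_mulVec_eq_zero_off hP hirr (T := (Set.range f)ᶜ) ?_ ?_ ?_
    · rwa [Set.nonempty_compl, Ne, Set.range_eq_univ]
    · intro l hl
      obtain ⟨k, rfl⟩ := not_not.1 hl
      rw [← submatrix_mulVec_apply_eq_mulVec_extend _ _ hf, hw0, Pi.zero_apply]
    · exact fun t ht => Function.extend_apply' _ _ _ ht
  refine hw (funext fun k => ?_)
  rw [← hf.extend_apply w 0 k, hext, Pi.zero_apply, Pi.zero_apply]

variable {R : Type*} [Field R] [LinearOrder R] [IsStrictOrderedRing R]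

lemma one_sub_mulVec_extend_nonsing_inv_apply {ι κ : Type*} [Fintype ι] [DecidableEq ι]
    [Fintype κ] [DecidableEq κ] {P : Matrix ι ι R} (hP : P ∈ rowStochastic R ι)
    (hirr : P.IsIrreducible) {f : κ → ι} (hf : Function.Injective f)
    (hf' : ¬ Function.Surjective f) (b : κ → R) (k : κ) :
    ((1 - P) *ᵥ Function.extend f (((1 - P).submatrix f f)⁻¹ *ᵥ b) 0) (f k) = b k := by
  have hdet := (det_submatrix_one_sub_ne_zero hP hirr hf hf').isUnit
  rw [← submatrix_mulVec_apply_eq_mulVec_extend _ _ hf, mulVec_mulVec, mul_nonsing_inv _ hdet,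
    one_mulVec]

theorem isCostMatrix_of_nonsing_inv {n : ℕ} {P : Matrix (Fin (n + 1)) (Fin (n + 1)) R}
    (hP : P ∈ rowStochastic R (Fin (n + 1))) (hirr : P.IsIrreducible) {c : Fin (n + 1) → R}
    {C : Fin (n + 1) → Fin (n + 1) → R} (hdiag : ∀ j, C j j = 0)
    (hoff : ∀ j k, C (j.succAbove k) j =
      (((1 - P).submatrix j.succAbove j.succAbove)⁻¹ *ᵥ fun l => c (j.succAbove l)) k) :
    IsCostMatrix P c C := by
  refine ⟨hdiag, fun {i j} hij => ?_⟩
  have hinj : Function.Injective j.succAbove := Fin.succAbove_right_injective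
  have hsurj : ¬ Function.Surjective j.succAbove := fun h =>
    (h j).elim fun k hk => Fin.succAbove_ne j k hk
  have hcol : (C · j) = Function.extend j.succAbove
      (((1 - P).submatrix j.succAbove j.succAbove)⁻¹ *ᵥ fun l => c (j.succAbove l)) 0 := by
    ext l
    obtain rfl | ⟨k, rfl⟩ := Fin.eq_self_or_eq_succAbove j l
    · rw [hdiag, Function.extend_apply' _ _ _ (by simp [Fin.succAbove_ne]), Pi.zero_apply]
    · rw [hoff, hinj.extend_apply]
  obtain ⟨k, rfl⟩ := Fin.exists_succAbove_eq hij
  rw [hcol, one_sub_mulVec_extend_nonsing_inv_apply hP hirr hinj hsurj]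

end ReducedMatrix

theorem nonempty_domain_triangle_roundtrip_tfae_general {ι R : Type*} [Fintype ι]
    [DecidableEq ι] [Nontrivial ι] [Ring R] [LinearOrder R] [IsStrictOrderedRing R]
    {P : Matrix ι ι R} {c : ι → R} {C : ι → ι → R} (hP : P ∈ rowStochastic R ι)
    (hirr : P.IsIrreducible) (hC : IsCostMatrix P c C) :
    [(costDomain P c).Nonempty,
      ∀ i j k, C j k ≤ C j i + C i k,
      ∀ m, m + 1 ≤ Fintype.card ι → ∀ idx : Fin (m + 1) → ι, Function.Injective idx →
        0 ≤ (∑ k : Fin m, C (idx k.castSucc) (idx k.succ)) +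
          C (idx (Fin.last m)) (idx 0)].TFAE := by
  tfae_have 1 → 2 := fun hD i j k =>
    hC.triangle_of_excursionCost_nonneg hP hirr ((hC.costDomain_nonempty_iff hP hirr k).1 hD) i j
  tfae_have 2 → 3 := fun htri _ _ idx _ => roundTrip_nonneg_of_triangle hC.diag htri idx
  tfae_have 3 → 1 := by
    intro hround
    obtain ⟨i, k, hik⟩ := exists_pair_ne ι
    have hik_round : 0 ≤ C i k + C k i := by
      simpa using hround 1 Fintype.one_lt_card ![i, k] (injective_pair_iff_ne.2 hik)
    exact (hC.costDomain_nonempty_iff hP hirr k).2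
      (hC.excursionCost_nonneg_of_roundTrip_nonneg hP hirr hik hik_round)
  tfae_finish

/-- Uncontrolled setting with an irreducible stochastic matrix `P`
(`d = n + 2`), cost vector `c̄`, cost matrix `C` and domain `D`.  The following are
equivalent:
(i) `D` is nonempty;
(ii) the triangle inequality `C j k ≤ C j i + C i k` holds for all `i, j, k`;
(iii) every round trip of length at most `d` has nonnegative cost: for all
`1 ≤ m + 1 ≤ d` and injective `idx : Fin (m+1) → Fin d`,
`∑_{k} C (idx k) (idx (k+1)) + C (idx last) (idx 0) ≥ 0`. -/
theorem nonempty_domain_triangle_roundtrip_tfae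
    (n : ℕ)
    (P : Matrix (Fin (n + 2)) (Fin (n + 2)) ℝ)
    (c : Fin (n + 2) → ℝ)
    (hP0 : ∀ i j, 0 ≤ P i j)
    (hP1 : ∀ i, ∑ j, P i j = 1)
    (hirr : ∀ i j, ∃ k : ℕ, 1 ≤ k ∧ 0 < (P ^ k) i j)
    (C : Fin (n + 2) → Fin (n + 2) → ℝ)
    (hCdiag : ∀ j, C j j = 0)
    (hCoff : ∀ (j : Fin (n + 2)) (k : Fin (n + 1)),
      C (j.succAbove k) j =
        (((1 - P).submatrix j.succAbove j.succAbove)⁻¹ *ᵥ fun l => c (j.succAbove l)) k)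
    (D : Set (Fin (n + 2) → ℝ))
    (hD : D = {x | ∀ i, (∑ j, P i j * x j) - c i ≤ x i}) :
    [D.Nonempty,
      ∀ i j k : Fin (n + 2), C j k ≤ C j i + C i k,
      ∀ m : ℕ, m + 1 ≤ n + 2 → ∀ idx : Fin (m + 1) → Fin (n + 2),
        Function.Injective idx →
          0 ≤ (∑ k : Fin m, C (idx k.castSucc) (idx k.succ)) +
            C (idx (Fin.last m)) (idx 0)].TFAE := by
  have hP : P ∈ rowStochastic ℝ (Fin (n + 2)) := mem_rowStochastic_iff_sum.2 ⟨hP0, hP1⟩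
  have hPirr : P.IsIrreducible := (isIrreducible_iff_exists_pow_pos hP0).2 hirr
  have hC : IsCostMatrix P c C := isCostMatrix_of_nonsing_inv hP hPirr hCdiag hCoff
  simpa only [hD, costDomain_eq_setOf, Fintype.card_fin] using
    nonempty_domain_triangle_roundtrip_tfae_general hP hPirr hC
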